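/- Let η, ν ≥ 0 with ν > 0, and set U(r) := c₀ ∫_r^∞ e^{−s²/4} ds with U(0)=1. Define φ(x, t) := U((|x| − ηt)⁺/√(νt)) for x ∈ ℝ^d, t > 0. Then for every t > 0 and x with |x| > ηt, φ is smooth near (x,t) and satisfies the equality ∂_t φ = η|Dφ| + ν·max{λ⁺ : λ eigenvalue of D²φ} classically, where the largest positive part of the eigenvalues of the Hessian D²φ at such a point equals U''(r)/(νt)·ν with r = (|x|−ηt)/√(νt); more precisely ∂_t φ − η|Dφ| − ν sup_{λ ∈ Sp(D²φ)} λ⁺ = −(r U'(r)/2 + U''(r))/t = 0. -/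

import Mathlib

/-! On `{|x| > ηt}` the truncation in `φ` is inactive, so `φ(·, t)` is a radial function `f(|x|)`.
Its Hessian is `f'/|x|` on `xᗮ` and `f''` on the line through `x`. As `f' ≤ 0 ≤ f''`, the largest
positive part of an eigenvalue is `f'' = U''(r)/(νt)`. The term `η|Dφ|` cancels the part of `∂ₜφ`
coming from the moving front, and the rest is `-1/t` times `rU'/2 + U''`, which vanishes because
`U'` is a multiple of `exp(-r²/4)`. -/

open Filter MeasureTheory Real Set Topology
open scoped ContDiff Gradient RealInnerProductSpace

section Idempotent

variable {K A : Type*} [Field K] [Ring A] [Algebra K A] {p : A}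

theorem isUnit_smul_one_sub_add_smul (hp : IsIdempotentElem p) {a b : K} (ha : a ≠ 0)
    (hb : b ≠ 0) : IsUnit (a • (1 - p) + b • p) := by
  have smul_mul (u v u' v' : K) :
      (u • (1 - p) + v • p) * (u' • (1 - p) + v' • p) = (u * u') • (1 - p) + (v * v') • p := by
    simp only [add_mul, mul_add, smul_mul_smul_comm, hp.one_sub.eq, hp.eq, hp.mul_one_sub_self,
      hp.one_sub_mul_self, smul_zero, add_zero, zero_add]
  exact isUnit_iff_exists.2
    ⟨a⁻¹ • (1 - p) + b⁻¹ • p, by simp [smul_mul, ha, hb], by simp [smul_mul, ha, hb]⟩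

theorem spectrum_smul_one_sub_add_smul_subset (hp : IsIdempotentElem p) (a b : K) :
    spectrum K (a • (1 - p) + b • p) ⊆ {a, b} := by
  intro l hl
  by_contra! hne
  simp only [mem_insert_iff, mem_singleton_iff, not_or] at hne
  have hsub : algebraMap K A l - (a • (1 - p) + b • p) = (l - a) • (1 - p) + (l - b) • p := by
    rw [Algebra.algebraMap_eq_smul_one]
    module
  exact spectrum.mem_iff.1 hl <|
    hsub ▸ isUnit_smul_one_sub_add_smul hp (sub_ne_zero.2 hne.1) (sub_ne_zero.2 hne.2)

theorem mem_spectrum_smul_one_sub_add_smul (hp : IsIdempotentElem p) (hp₀ : p ≠ 0) (a b : K) :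
    b ∈ spectrum K (a • (1 - p) + b • p) := by
  intro hunit
  refine hp₀ (hunit.mul_right_eq_zero.1 ?_)
  simp only [sub_mul, add_mul, smul_mul_assoc, hp.one_sub_mul_self, hp.eq, smul_zero, zero_add,
    Algebra.algebraMap_eq_smul_one, one_mul, sub_self]

theorem isGreatest_posPart_spectrum_smul_one_sub_add_smul [LinearOrder K]
    (hp : IsIdempotentElem p) (hp₀ : p ≠ 0) {a b : K} (ha : a ≤ 0) (hb : 0 ≤ b) :
    IsGreatest ((fun l => max l 0) '' spectrum K (a • (1 - p) + b • p)) b := by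
  refine ⟨⟨b, mem_spectrum_smul_one_sub_add_smul hp hp₀ a b, max_eq_left hb⟩, ?_⟩
  rintro _ ⟨l, hl, rfl⟩
  rcases spectrum_smul_one_sub_add_smul_subset hp a b hl with rfl | rfl
  · exact max_le (ha.trans hb) hb
  · exact max_le le_rfl hb

end Idempotent

section Hessian

variable {E : Type*} [NormedAddCommGroup E] [InnerProductSpace ℝ E] [CompleteSpace E]

/-- The Hessian of `f` at `x`, as the operator on `E` which differentiates the gradient. -/
noncomputable def hessian (f : E → ℝ) (x : E) : E →L[ℝ] E :=
  fderiv ℝ (∇ f) x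

theorem inner_hessian_apply {f : E → ℝ} {x : E} (hf : DifferentiableAt ℝ (fderiv ℝ f) x)
    (v w : E) : ⟪hessian f x v, w⟫ = fderiv ℝ (fun y => fderiv ℝ f y w) x v := by
  have hgrad : DifferentiableAt ℝ (∇ f) x :=
    (InnerProductSpace.toDual ℝ E).symm.toContinuousLinearEquiv.differentiableAt.comp x hf
  have hinner : (fun y => fderiv ℝ f y w) = fun y => ⟪∇ f y, w⟫ :=
    funext fun _ => inner_gradient_left.symm
  rw [hinner, fderiv_inner_apply ℝ hgrad (differentiableAt_const w)]
  simp [hessian]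

theorem spectrum_eq_spectrum_hessian {ι : Type*} [Fintype ι] [DecidableEq ι]
    {f : EuclideanSpace ℝ ι → ℝ} {x : EuclideanSpace ℝ ι}
    (hf : DifferentiableAt ℝ (fderiv ℝ f) x) {H : Matrix ι ι ℝ}
    (hH : ∀ i j, H i j = fderiv ℝ (fun y => fderiv ℝ f y (EuclideanSpace.single j 1)) x
      (EuclideanSpace.single i 1)) :
    spectrum ℝ H = spectrum ℝ (hessian f x) := by
  have hadj : Matrix.toEuclideanCLM (𝕜 := ℝ) H = star (hessian f x) := by
    refine ContinuousLinearMap.coe_injective ((EuclideanSpace.basisFun ι ℝ).toBasis.ext fun j => ?_)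
    ext i
    have hentry : star (hessian f x) (EuclideanSpace.single j 1) i = H i j := by
      rw [hH, ← inner_hessian_apply hf, ContinuousLinearMap.star_eq_adjoint,
        ← ContinuousLinearMap.adjoint_inner_right,
        EuclideanSpace.inner_single_left, map_one, one_mul]
    simp [hentry]
  rw [← AlgEquiv.spectrum_eq (Matrix.toEuclideanCLM (𝕜 := ℝ) (n := ι)), hadj, spectrum.map_star,
    star_trivial]

end Hessian

section Radial

variable {E : Type*} [NormedAddCommGroup E] [InnerProductSpace ℝ E] [CompleteSpace E]
  {f : ℝ → ℝ} {x : E}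

theorem hasGradientAt_norm (hx : x ≠ 0) : HasGradientAt (fun y : E => ‖y‖) (‖x‖⁻¹ • x) x := by
  have hsqrt := (hasStrictFDerivAt_norm_sq x).hasFDerivAt.sqrt (by simpa using hx)
  simp only [sqrt_sq (norm_nonneg _)] at hsqrt
  refine hasGradientAt_iff_hasFDerivAt.2 (hsqrt.congr_fderiv ?_)
  ext v
  simp only [smul_apply, coe_innerSL_apply, nsmul_eq_mul, Nat.cast_ofNat, smul_eq_mul, map_smul,
    InnerProductSpace.toDual_apply_apply]
  field_simp

theorem hasGradientAt_comp_norm {f' : ℝ} (hf : HasDerivAt f f' ‖x‖) (hx : x ≠ 0) :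
    HasGradientAt (fun y : E => f ‖y‖) ((f' / ‖x‖) • x) x := by
  refine hasGradientAt_iff_hasFDerivAt.2
    ((hf.comp_hasFDerivAt x (hasGradientAt_norm hx).hasFDerivAt).congr_fderiv ?_)
  rw [div_eq_mul_inv, mul_smul, map_smul _ f']

theorem norm_gradient_comp_norm (hf : DifferentiableAt ℝ f ‖x‖) (hx : x ≠ 0) :
    ‖∇ (fun y : E => f ‖y‖) x‖ = |deriv f ‖x‖| := by
  rw [(hasGradientAt_comp_norm hf.hasDerivAt hx).gradient, norm_smul, norm_div, norm_norm,
    div_mul_cancel₀ _ (norm_ne_zero_iff.2 hx), norm_eq_abs]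

theorem hessian_comp_norm (hf : ContDiffAt ℝ 2 f ‖x‖) (hx : x ≠ 0) :
    hessian (fun y : E => f ‖y‖) x
      = (deriv f ‖x‖ / ‖x‖) • (1 - (ℝ ∙ x).starProjection)
        + deriv (deriv f) ‖x‖ • (ℝ ∙ x).starProjection := by
  have hgrad : ∇ (fun y : E => f ‖y‖) =ᶠ[𝓝 x] fun y => (deriv f ‖y‖ / ‖y‖) • y := by
    filter_upwards [continuous_norm.continuousAt.eventually (hf.eventually (by simp)),
      isOpen_ne.mem_nhds hx] with y hy hy₀
    exact (hasGradientAt_comp_norm (hy.differentiableAt (by simp)).hasDerivAt hy₀).gradient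
  have hderiv : HasDerivAt (deriv f) (deriv (deriv f) ‖x‖) ‖x‖ := by
    have hfderiv := (hf.fderiv_right (m := 1) (by norm_num)).differentiableAt one_ne_zero
    simp only [← fderiv_apply_one_eq_deriv]
    exact (hfderiv.clm_apply (differentiableAt_const 1)).hasDerivAt
  have hcoeff := hasGradientAt_iff_hasFDerivAt.1 <| hasGradientAt_comp_norm
    (f := fun ρ => deriv f ρ / ρ) (hderiv.div (hasDerivAt_id' ‖x‖) (norm_ne_zero_iff.2 hx)) hx
  rw [hessian, hgrad.fderiv_eq]
  refine (hcoeff.fun_smul (hasFDerivAt_id x)).fderiv.trans ?_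
  ext v
  simp only [mul_one, map_smul, id_eq, add_apply, smul_apply, ContinuousLinearMap.id_apply,
    ContinuousLinearMap.smulRight_apply, InnerProductSpace.toDual_apply_apply, smul_eq_mul,
    sub_apply, one_apply_eq_self, Submodule.starProjection_singleton, ringHom_apply]
  match_scalars
  · field_simp
  · field_simp
    ring

theorem isGreatest_posPart_spectrum_hessian_comp_norm (hf : ContDiffAt ℝ 2 f ‖x‖) (hx : x ≠ 0)
    (hf' : deriv f ‖x‖ ≤ 0) (hf'' : 0 ≤ deriv (deriv f) ‖x‖) :
    IsGreatest ((fun l => max l 0) '' spectrum ℝ (hessian (fun y : E => f ‖y‖) x))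
      (deriv (deriv f) ‖x‖) := by
  have hproj : (ℝ ∙ x).starProjection ≠ 0 := fun h => hx <| by
    simpa [h] using
      (Submodule.starProjection_eq_self_iff.2 (Submodule.mem_span_singleton_self (R := ℝ) x)).symm
  rw [hessian_comp_norm hf hx]
  exact isGreatest_posPart_spectrum_smul_one_sub_add_smul
    (ℝ ∙ x).isIdempotentElem_starProjection hproj
    (div_nonpos_of_nonpos_of_nonneg hf' (norm_nonneg x)) hf''

end Radial

theorem deriv_comp_sub_div (U : ℝ → ℝ) (m s : ℝ) :
    deriv (fun ρ => U ((ρ - m) / s)) = fun ρ => deriv U ((ρ - m) / s) / s := by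
  ext ρ
  simp only [div_eq_inv_mul]
  rw [deriv_comp_sub_const (fun ρ => U (s⁻¹ * ρ)) m ρ, deriv_comp_mul_left s⁻¹ U, smul_eq_mul]

theorem deriv_deriv_comp_sub_div (U : ℝ → ℝ) (m s : ℝ) :
    deriv (deriv fun ρ => U ((ρ - m) / s)) = fun ρ => deriv (deriv U) ((ρ - m) / s) / s ^ 2 := by
  ext ρ
  rw [deriv_comp_sub_div, deriv_div_const, deriv_comp_sub_div]
  ring

section Front

/-- The self-similar front `U((|x| - ηt)⁺ / √(νt))` with profile `U`, which advances at speed `η`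
and spreads at the diffusive rate `√(νt)`. -/
noncomputable def selfSimilarFront {E : Type*} [Norm E] (U : ℝ → ℝ) (η ν : ℝ) (x : E) (t : ℝ) :
    ℝ :=
  U (max (‖x‖ - η * t) 0 / √(ν * t))

variable {E : Type*} [NormedAddCommGroup E] {U : ℝ → ℝ} {η ν t : ℝ} {x : E}

theorem selfSimilarFront_eventuallyEq (hx : η * t < ‖x‖) :
    (fun p : E × ℝ => selfSimilarFront U η ν p.1 p.2)
      =ᶠ[𝓝 (x, t)] fun p => U ((‖p.1‖ - η * p.2) / √(ν * p.2)) := by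
  have hopen : IsOpen {p : E × ℝ | η * p.2 < ‖p.1‖} := isOpen_lt (by fun_prop) (by fun_prop)
  filter_upwards [hopen.mem_nhds hx] with p hp
  rw [selfSimilarFront, max_eq_left (sub_nonneg.2 (le_of_lt hp))]

theorem selfSimilarFront_eventuallyEq_comp_norm (hx : η * t < ‖x‖) :
    (fun y : E => selfSimilarFront U η ν y t)
      =ᶠ[𝓝 x] fun y => U ((‖y‖ - η * t) / √(ν * t)) :=
  (Continuous.prodMk_left t).continuousAt.eventually (selfSimilarFront_eventuallyEq hx)

theorem hasDerivAt_selfSimilarFront (hν : 0 < ν) (ht : 0 < t) (hx : η * t < ‖x‖)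
    (hU : DifferentiableAt ℝ U ((‖x‖ - η * t) / √(ν * t))) :
    HasDerivAt (selfSimilarFront U η ν x)
      (deriv U ((‖x‖ - η * t) / √(ν * t))
        * (-η / √(ν * t) - (‖x‖ - η * t) / √(ν * t) / (2 * t))) t := by
  have hs : 0 < √(ν * t) := sqrt_pos.2 (mul_pos hν ht)
  have hnum : HasDerivAt (fun τ => ‖x‖ - η * τ) (-η) t := by
    simpa using ((hasDerivAt_id t).const_mul η).const_sub ‖x‖
  have hden : HasDerivAt (fun τ => √(ν * τ)) (ν / (2 * √(ν * t))) t := by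
    simpa using ((hasDerivAt_id t).const_mul ν).sqrt (mul_pos hν ht).ne'
  have hquot : HasDerivAt (fun τ => (‖x‖ - η * τ) / √(ν * τ))
      (-η / √(ν * t) - (‖x‖ - η * t) / √(ν * t) / (2 * t)) t := by
    refine (hnum.div hden hs.ne').congr_deriv ?_
    have hsq : √(ν * t) ^ 2 = ν * t := sq_sqrt (mul_pos hν ht).le
    field_simp
    rw [hsq]
    field_simp
  exact (hU.hasDerivAt.comp t hquot).congr_of_eventuallyEq
    ((Continuous.prodMk_right x).continuousAt.eventually (selfSimilarFront_eventuallyEq hx))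

variable [InnerProductSpace ℝ E]

theorem contDiffAt_selfSimilarFront {n : WithTop ℕ∞} (hν : 0 < ν) (ht : 0 < t) (hx₀ : x ≠ 0)
    (hx : η * t < ‖x‖) (hU : ContDiffAt ℝ n U ((‖x‖ - η * t) / √(ν * t))) :
    ContDiffAt ℝ n (fun p : E × ℝ => selfSimilarFront U η ν p.1 p.2) (x, t) := by
  have hnorm : ContDiffAt ℝ n (fun p : E × ℝ => ‖p.1‖) (x, t) := contDiffAt_fst.norm ℝ hx₀
  have hsqrt : ContDiffAt ℝ n (fun p : E × ℝ => √(ν * p.2)) (x, t) :=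
    (contDiffAt_const.mul contDiffAt_snd).sqrt (mul_pos hν ht).ne'
  exact (hU.comp (x, t) ((hnorm.sub (contDiffAt_const.mul contDiffAt_snd)).div hsqrt
    (sqrt_pos.2 (mul_pos hν ht)).ne')).congr_of_eventuallyEq (selfSimilarFront_eventuallyEq hx)

variable [CompleteSpace E]

theorem norm_gradient_selfSimilarFront (hx₀ : x ≠ 0) (hx : η * t < ‖x‖)
    (hU : DifferentiableAt ℝ U ((‖x‖ - η * t) / √(ν * t))) :
    ‖∇ (fun y : E => selfSimilarFront U η ν y t) x‖
      = |deriv U ((‖x‖ - η * t) / √(ν * t))| / √(ν * t) := by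
  rw [(selfSimilarFront_eventuallyEq_comp_norm hx).gradient_eq,
    norm_gradient_comp_norm (f := fun ρ => U ((ρ - η * t) / √(ν * t))) (by fun_prop) hx₀,
    deriv_comp_sub_div, abs_div, abs_of_nonneg (sqrt_nonneg _)]

theorem isGreatest_posPart_spectrum_hessian_selfSimilarFront (hν : 0 < ν) (ht : 0 < t)
    (hx₀ : x ≠ 0) (hx : η * t < ‖x‖) (hU : ContDiffAt ℝ 2 U ((‖x‖ - η * t) / √(ν * t)))
    (hU' : deriv U ((‖x‖ - η * t) / √(ν * t)) ≤ 0)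
    (hU'' : 0 ≤ deriv (deriv U) ((‖x‖ - η * t) / √(ν * t))) :
    IsGreatest ((fun l => max l 0) ''
        spectrum ℝ (hessian (fun y : E => selfSimilarFront U η ν y t) x))
      (deriv (deriv U) ((‖x‖ - η * t) / √(ν * t)) / (ν * t)) := by
  have hradial := isGreatest_posPart_spectrum_hessian_comp_norm
    (f := fun ρ => U ((ρ - η * t) / √(ν * t))) (x := x)
    (hU.comp ‖x‖ (by fun_prop)) hx₀
  rw [deriv_deriv_comp_sub_div, deriv_comp_sub_div, sq_sqrt (mul_pos hν ht).le] at hradial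
  rw [hessian, (selfSimilarFront_eventuallyEq_comp_norm hx).gradient.fderiv_eq]
  exact hradial (div_nonpos_of_nonpos_of_nonneg hU' (sqrt_nonneg _))
    (div_nonneg hU'' (mul_pos hν ht).le)

theorem selfSimilarFront_residual (hν : 0 < ν) (ht : 0 < t)
    (hx₀ : x ≠ 0) (hx : η * t < ‖x‖) {r : ℝ} (hr : r = (‖x‖ - η * t) / √(ν * t))
    (hU : ContDiffAt ℝ 2 U r) (hU' : deriv U r ≤ 0) (hU'' : 0 ≤ deriv (deriv U) r) :
    deriv (selfSimilarFront U η ν x) t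
        - η * ‖∇ (fun y : E => selfSimilarFront U η ν y t) x‖
        - ν * sSup ((fun l => max l 0) ''
            spectrum ℝ (hessian (fun y : E => selfSimilarFront U η ν y t) x))
      = -(r * deriv U r / 2 + deriv (deriv U) r) / t := by
  subst hr
  have hdiff := hU.differentiableAt (by simp)
  rw [(hasDerivAt_selfSimilarFront hν ht hx hdiff).deriv,
    norm_gradient_selfSimilarFront hx₀ hx hdiff, abs_of_nonpos hU',
    (isGreatest_posPart_spectrum_hessian_selfSimilarFront hν ht hx₀ hx hU hU' hU'').csSup_eq]
  field_simp
  ring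

end Front

section Profile

theorem hasDerivAt_setIntegral_Ioi {F : Type*} [NormedAddCommGroup F] [NormedSpace ℝ F]
    [CompleteSpace F] {f : ℝ → F} (hf : Integrable f) {r : ℝ} (hr : ContinuousAt f r) :
    HasDerivAt (fun u => ∫ s in Ioi u, f s) (-f r) r := by
  have hsplit : (fun u => ∫ s in Ioi u, f s)
      = fun u => (∫ s in Ioi r, f s) - ∫ s in r..u, f s := by
    ext u
    rw [eq_sub_iff_add_eq',
      intervalIntegral.integral_interval_add_Ioi hf.integrableOn hf.integrableOn]
  rw [hsplit]
  exact (intervalIntegral.integral_hasDerivAt_right hf.intervalIntegrable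
    hf.aestronglyMeasurable.stronglyMeasurableAtFilter hr).const_sub _

/-- The profile `U(r) = c ∫_r^∞ exp(-s²/4) ds` of the self-similar solution, for an arbitrary
constant `c`; the normalization `U(0) = 1` is not built in. -/
noncomputable def gaussianTail (c r : ℝ) : ℝ :=
  c * ∫ s in Ioi r, exp (-s ^ 2 / 4)

variable (c : ℝ)

theorem hasDerivAt_gaussianTail (r : ℝ) :
    HasDerivAt (gaussianTail c) (-c * exp (-r ^ 2 / 4)) r := by
  have hint : Integrable fun s : ℝ => exp (-s ^ 2 / 4) := by
    simpa only [neg_mul, neg_div, one_div, inv_mul_eq_div] using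
      integrable_exp_neg_mul_sq (b := 1 / 4) (by norm_num)
  have hcont : Continuous fun s : ℝ => exp (-s ^ 2 / 4) := by fun_prop
  exact ((hasDerivAt_setIntegral_Ioi hint hcont.continuousAt).const_mul c).congr_deriv (by ring)

theorem deriv_gaussianTail : deriv (gaussianTail c) = fun r => -c * exp (-r ^ 2 / 4) :=
  funext fun r => (hasDerivAt_gaussianTail c r).deriv

theorem contDiff_gaussianTail : ContDiff ℝ ∞ (gaussianTail c) := by
  rw [contDiff_infty_iff_deriv, deriv_gaussianTail]
  exact ⟨fun r => (hasDerivAt_gaussianTail c r).differentiableAt, by fun_prop⟩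

theorem deriv_deriv_gaussianTail (r : ℝ) :
    deriv (deriv (gaussianTail c)) r = -(r / 2) * deriv (gaussianTail c) r := by
  have hexponent : HasDerivAt (fun u : ℝ => -u ^ 2 / 4) (-(r / 2)) r :=
    ((hasDerivAt_pow 2 r).neg.div_const 4).congr_deriv (by norm_num; ring)
  rw [deriv_gaussianTail, (hexponent.exp.const_mul (-c)).deriv]
  ring

variable {c}

theorem deriv_gaussianTail_nonpos (hc : 0 ≤ c) (r : ℝ) : deriv (gaussianTail c) r ≤ 0 := by
  rw [deriv_gaussianTail]
  exact mul_nonpos_of_nonpos_of_nonneg (neg_nonpos.2 hc) (exp_nonneg _)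

theorem deriv_deriv_gaussianTail_nonneg (hc : 0 ≤ c) {r : ℝ} (hr : 0 ≤ r) :
    0 ≤ deriv (deriv (gaussianTail c)) r := by
  rw [deriv_deriv_gaussianTail]
  exact mul_nonneg_of_nonpos_of_nonpos (by linarith) (deriv_gaussianTail_nonpos hc r)

end Profile

theorem stmt_8_general {E : Type*} [NormedAddCommGroup E] [InnerProductSpace ℝ E]
    [CompleteSpace E] {c η ν t r : ℝ} {x : E} (hc : 0 ≤ c) (hν : 0 < ν) (ht : 0 < t)
    (hx₀ : x ≠ 0) (hx : η * t < ‖x‖) (hr : r = (‖x‖ - η * t) / √(ν * t))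
    {U : ℝ → ℝ} (hU : U = gaussianTail c) :
    ContDiffAt ℝ ∞ (fun p : E × ℝ => selfSimilarFront U η ν p.1 p.2) (x, t) ∧
    sSup ((fun l => max l 0) '' spectrum ℝ (hessian (fun y => selfSimilarFront U η ν y t) x))
      = deriv (deriv U) r / (ν * t) ∧
    deriv (selfSimilarFront U η ν x) t
        - η * ‖∇ (fun y => selfSimilarFront U η ν y t) x‖
        - ν * sSup ((fun l => max l 0) ''
            spectrum ℝ (hessian (fun y => selfSimilarFront U η ν y t) x))
      = -(r * deriv U r / 2 + deriv (deriv U) r) / t ∧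
    -(r * deriv U r / 2 + deriv (deriv U) r) / t = 0 := by
  have hsmooth : ContDiff ℝ ∞ U := hU ▸ contDiff_gaussianTail c
  have hU' : deriv U r ≤ 0 := hU ▸ deriv_gaussianTail_nonpos hc r
  have hU'' : 0 ≤ deriv (deriv U) r := hU ▸ deriv_deriv_gaussianTail_nonneg hc
    (hr ▸ div_nonneg (sub_pos.2 hx).le (sqrt_nonneg _))
  have hode : r * deriv U r / 2 + deriv (deriv U) r = 0 := by
    rw [hU, deriv_deriv_gaussianTail]
    ring
  have hU₂ : ContDiffAt ℝ 2 U r := hsmooth.contDiffAt.of_le (by norm_cast)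
  refine ⟨contDiffAt_selfSimilarFront hν ht hx₀ hx hsmooth.contDiffAt, ?_,
    selfSimilarFront_residual hν ht hx₀ hx hr hU₂ hU' hU'', by rw [hode, neg_zero, zero_div]⟩
  subst hr
  exact (isGreatest_posPart_spectrum_hessian_selfSimilarFront hν ht hx₀ hx hU₂ hU' hU'').csSup_eq

/-- The function `φ(x,t) = U((|x| - ηt)⁺/√(νt))` solves
`∂_t φ = η|Dφ| + ν sup_{λ ∈ Sp(D²φ)} λ⁺` classically in the region `|x| > ηt`, `t > 0`,
where the sup of positive parts of the eigenvalues of the Hessian equals `U''(r)/(νt)`,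
`r = (|x| - ηt)/√(νt)`; more precisely
`∂_t φ - η|Dφ| - ν sup λ⁺ = -(rU'(r)/2 + U''(r))/t = 0`. -/
theorem stmt_8 (d : ℕ) (hd : 1 ≤ d) (η ν : ℝ) (hη : 0 ≤ η) (hν : 0 < ν)
    (c₀ : ℝ) (hc₀ : c₀ = (∫ s in Set.Ioi (0 : ℝ), Real.exp (-s ^ 2 / 4))⁻¹)
    (U : ℝ → ℝ) (hU : ∀ r, U r = c₀ * ∫ s in Set.Ioi r, Real.exp (-s ^ 2 / 4))
    (t : ℝ) (ht : 0 < t) (x : EuclideanSpace ℝ (Fin d)) (hx : η * t < ‖x‖)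
    (φ : EuclideanSpace ℝ (Fin d) → ℝ)
    (hφ : ∀ y, φ y = U (max (‖y‖ - η * t) 0 / Real.sqrt (ν * t)))
    (r : ℝ) (hr : r = (‖x‖ - η * t) / Real.sqrt (ν * t))
    (Hess : Matrix (Fin d) (Fin d) ℝ)
    (hHess : ∀ i j, Hess i j
      = fderiv ℝ (fun y => fderiv ℝ φ y (EuclideanSpace.single j 1)) x
          (EuclideanSpace.single i 1)) :
    ContDiffAt ℝ (⊤ : ℕ∞) φ x ∧
    sSup ((fun l => max l 0) '' spectrum ℝ Hess) = deriv (deriv U) r / (ν * t) ∧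
    deriv (fun τ => U (max (‖x‖ - η * τ) 0 / Real.sqrt (ν * τ))) t
        - η * ‖gradient φ x‖
        - ν * sSup ((fun l => max l 0) '' spectrum ℝ Hess)
      = -(r * deriv U r / 2 + deriv (deriv U) r) / t ∧
    -(r * deriv U r / 2 + deriv (deriv U) r) / t = 0 := by
  obtain rfl : U = gaussianTail c₀ := funext hU
  obtain rfl : φ = fun y => selfSimilarFront (gaussianTail c₀) η ν y t := funext hφ
  have hc : 0 ≤ c₀ := hc₀ ▸ inv_nonneg.2 (integral_nonneg fun s => (exp_pos _).le)
  have hx₀ : x ≠ 0 := norm_pos_iff.1 ((mul_nonneg hη ht.le).trans_lt hx)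
  obtain ⟨hjoint, hmain⟩ := stmt_8_general hc hν ht hx₀ hx hr rfl
  have hsmooth := hjoint.comp x (contDiffAt_id.prodMk contDiffAt_const)
  have hdiff := (hsmooth.fderiv_right (m := ∞) le_rfl).differentiableAt (by simp)
  rw [spectrum_eq_spectrum_hessian hdiff hHess]
  exact ⟨hsmooth, hmain⟩
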